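/- arXiv:0911.1587 — 6 statements merged into one kernel-verified Lean document; each statement's English description precedes it below -/
import Mathlib

section
/- Let G be a finite simple graph and let v be a vertex of G of degree 4 whose neighbourhood is {v1, v2, v3, v4}, where v1v2, v2v3, v3v4, v4v1 are edges of G while v1v3 and v2v4 are not edges of G. Then the number of proper 4-colorings of G equals the number of proper 4-colorings c of G−v with c(v1) = c(v3) plus the number of proper 4-colorings c of G−v with c(v2) = c(v4). (This is the paper's identity f(G,4) = f(G1,4) + f(G2,4), where G1 = (G−v)∘{v1,v3} and G2 = (G−v)∘{v2,v4} are obtained from G−v by identifying the indicated non-adjacent pair, since proper 4-colorings of the identification correspond exactly to proper 4-colorings of G−v giving the identified pair equal colors.) -/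
/-!
Restricting a proper 4-coloring of `G` to `G - v` exhibits it as a proper 4-coloring `c` of `G - v`
together with a color for `v` not used on `v1, v2, v3, v4` (`coloringEquiv`). Hence the left side
is the sum over `c` of the number of colors missing on the 4-cycle `v1v2v3v4`. A proper coloring
of a 4-cycle from four colors misses 2, 1 or 0 colors according to how many of the two opposite
pairs are monochromatic (`card_missing`), so that each `c` contributes to the left side exactly
the number of the two sets on the right that contain it.
-/

/-- Pointwise form of the identity: the number of colors missing on a properly 4-colored 4-cycle
is the number of its monochromatic opposite pairs. -/
lemma card_missing : ∀ a b c d : Fin 4, a ≠ b → b ≠ c → c ≠ d → d ≠ a →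
    Fintype.card {k : Fin 4 // k ≠ a ∧ k ≠ b ∧ k ≠ c ∧ k ≠ d} =
      (if a = c then 1 else 0) + (if b = d then 1 else 0) := by
  decide

open Classical in
/-- A proper coloring of `G` is a proper coloring of `G - v` together with a color for `v`
that differs from the colors of all neighbours of `v`. -/
noncomputable def coloringEquiv {V : Type*} (G : SimpleGraph V) (v v1 v2 v3 v4 : V)
    (hv1 : v1 ≠ v) (hv2 : v2 ≠ v) (hv3 : v3 ≠ v) (hv4 : v4 ≠ v)
    (hnbr : ∀ x, G.Adj v x ↔ x = v1 ∨ x = v2 ∨ x = v3 ∨ x = v4) :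
    {c : V → Fin 4 // ∀ ⦃x y⦄, G.Adj x y → c x ≠ c y} ≃
      Σ c : {c : ↥{x : V | x ≠ v} → Fin 4 //
          ∀ ⦃x y⦄, (G.induce {x : V | x ≠ v}).Adj x y → c x ≠ c y},
        {k : Fin 4 // k ≠ c.1 ⟨v1, hv1⟩ ∧ k ≠ c.1 ⟨v2, hv2⟩ ∧
          k ≠ c.1 ⟨v3, hv3⟩ ∧ k ≠ c.1 ⟨v4, hv4⟩} where
  toFun c := ⟨⟨fun x => c.1 x, fun _ _ h => c.2 h⟩, c.1 v,
    c.2 ((hnbr v1).2 (by simp)), c.2 ((hnbr v2).2 (by simp)),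
    c.2 ((hnbr v3).2 (by simp)), c.2 ((hnbr v4).2 (by simp))⟩
  invFun p := ⟨fun x => if h : x = v then p.2.1 else p.1.1 ⟨x, h⟩, by
    obtain ⟨⟨c, hc⟩, k, hk1, hk2, hk3, hk4⟩ := p
    have key : ∀ y (hy : y ≠ v), G.Adj v y → k ≠ c ⟨y, hy⟩ := by
      intro y hy h
      rcases (hnbr y).1 h with rfl | rfl | rfl | rfl <;> assumption
    intro x y h
    by_cases hx : x = v
    · subst hx
      have hy : y ≠ x := h.ne'
      simpa [hy] using key y hy h
    · by_cases hy : y = v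
      · subst hy
        simpa [hx] using (key x hx h.symm).symm
      · simpa [hx, hy] using hc (x := ⟨x, hx⟩) (y := ⟨y, hy⟩) h⟩
  left_inv c := by
    ext x
    by_cases hx : x = v <;> simp [hx]
  right_inv p := by
    obtain ⟨⟨c, hc⟩, k, hk⟩ := p
    have hres : (fun x : ↥{x : V | x ≠ v} =>
        if h : (x : V) = v then k else c ⟨x, h⟩) = c := by
      funext x
      exact dif_neg x.2
    refine Sigma.ext (Subtype.ext hres) ?_
    refine (Subtype.heq_iff_coe_eq ?_).2 (by simp)
    intro j
    simp [hv1, hv2, hv3, hv4]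

lemma card_and_eq_sum {α : Type*} [Finite α] (p q : α → Prop) [Fintype {a // p a}]
    [DecidablePred q] :
    Nat.card {a // p a ∧ q a} = ∑ a : {a // p a}, if q a.1 then 1 else 0 := by
  rw [← Nat.card_congr (Equiv.subtypeSubtypeEquivSubtypeInter p q), Nat.card_eq_fintype_card,
    Fintype.card_subtype, Finset.card_filter]

/-- For a degree-4 vertex `v` with neighbourhood `{v1, v2, v3, v4}`
inducing the 4-cycle `v1v2v3v4` (with diagonals `v1v3`, `v2v4` absent),
the number of proper 4-colorings of `G` equals the number of proper
4-colorings of `G - v` with `c v1 = c v3` plus the number of proper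
4-colorings of `G - v` with `c v2 = c v4`. -/
theorem stmt_0 {V : Type*} [Fintype V] (G : SimpleGraph V)
    (v v1 v2 v3 v4 : V)
    (hv1 : v1 ≠ v) (hv2 : v2 ≠ v) (hv3 : v3 ≠ v) (hv4 : v4 ≠ v)
    (h12d : v1 ≠ v2) (h13d : v1 ≠ v3) (h14d : v1 ≠ v4)
    (h23d : v2 ≠ v3) (h24d : v2 ≠ v4) (h34d : v3 ≠ v4)
    (hnbr : G.neighborSet v = {v1, v2, v3, v4})
    (h12 : G.Adj v1 v2) (h23 : G.Adj v2 v3) (h34 : G.Adj v3 v4) (h41 : G.Adj v4 v1)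
    (h13 : ¬ G.Adj v1 v3) (h24 : ¬ G.Adj v2 v4) :
    Nat.card {c : V → Fin 4 // ∀ ⦃x y⦄, G.Adj x y → c x ≠ c y} =
      Nat.card {c : ↥{x : V | x ≠ v} → Fin 4 //
          (∀ ⦃x y⦄, (G.induce {x : V | x ≠ v}).Adj x y → c x ≠ c y) ∧
            c ⟨v1, hv1⟩ = c ⟨v3, hv3⟩} +
      Nat.card {c : ↥{x : V | x ≠ v} → Fin 4 //
          (∀ ⦃x y⦄, (G.induce {x : V | x ≠ v}).Adj x y → c x ≠ c y) ∧
            c ⟨v2, hv2⟩ = c ⟨v4, hv4⟩} := by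
  classical
  have hadj : ∀ x, G.Adj v x ↔ x = v1 ∨ x = v2 ∨ x = v3 ∨ x = v4 := by
    intro x
    rw [← SimpleGraph.mem_neighborSet, hnbr]
    simp
  rw [Nat.card_congr (coloringEquiv G v v1 v2 v3 v4 hv1 hv2 hv3 hv4 hadj), Nat.card_sigma,
    card_and_eq_sum, card_and_eq_sum, ← Finset.sum_add_distrib]
  refine Finset.sum_congr rfl fun c _ => ?_
  rw [Nat.card_eq_fintype_card]
  exact card_missing _ _ _ _ (c.2 (x := ⟨v1, hv1⟩) (y := ⟨v2, hv2⟩) h12)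
    (c.2 (x := ⟨v2, hv2⟩) (y := ⟨v3, hv3⟩) h23) (c.2 (x := ⟨v3, hv3⟩) (y := ⟨v4, hv4⟩) h34)
    (c.2 (x := ⟨v4, hv4⟩) (y := ⟨v1, hv1⟩) h41)
end

section
/- Let G be a finite simple graph and let v be a vertex of G of degree 5 whose neighbourhood is {v1, v2, v3, v4, v5} and induces exactly the 5-cycle v1v2v3v4v5 (so v1v2, v2v3, v3v4, v4v5, v5v1 are edges of G, while v1v3, v1v4, v2v4, v2v5, v3v5 are not edges of G). Then the number of proper 4-colorings of G equals A + B + C, where A is the number of proper 4-colorings c of G−v with c(v2) = c(v5) and (c(v1) = c(v4) or c(v1) = c(v3)); B is the number of proper 4-colorings c of G−v with c(v2) = c(v4) and (c(v3) = c(v1) or c(v3) = c(v5)); and C is the number of proper 4-colorings c of G−v with c(v3) = c(v5) and c(v4) = c(v1). (This is the paper's identity f(G,4) = [f(G1,4) − f(G1∪{v1v4, v1v3},4)] + [f(G2,4) − f(G2∪{v3v1, v3v5},4)] + [f(G3,4) − f(G3∪{v4v1},4)], where G1 = (G−v)∘{v2,v5}, G2 = (G−v)∘{v2,v4}, G3 =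 (G−v)∘{v3,v5}, expressed via colorings of G−v subject to the indicated equality constraints.) -/
/-!
Restricting a proper 4-coloring of `G` to `G - v` is injective, because the rim, an odd cycle,
uses at least three of the four colors and so leaves at most one color for `v`
(`hub_color_unique`). A proper 4-coloring of `G - v` is such a restriction exactly when the rim
uses exactly three colors. A 3-coloring of the 5-cycle has one rim vertex with a color of its
own, and the other four form two monochromatic non-adjacent pairs; the five choices of the
singleton are shared out among the conditions counted by `A` (singletons `v3`, `v4`),
`B` (singletons `v1`, `v5`) and `C` (singleton `v2`) (`exists_hub_color_iff`). These conditions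
are mutually exclusive, so the three counts add up.
-/

set_option synthInstance.maxHeartbeats 400000 in
set_option synthInstance.maxSize 2000 in
/-- A proper 4-coloring `(a, b, c, d, e)` of the 5-cycle leaves at most one color unused. -/
lemma hub_color_unique : ∀ a b c d e : Fin 4, a ≠ b → b ≠ c → c ≠ d → d ≠ e → e ≠ a →
    ∀ p, p ≠ a → p ≠ b → p ≠ c → p ≠ d → p ≠ e →
    ∀ q, q ≠ a → q ≠ b → q ≠ c → q ≠ d → q ≠ e → p = q := by
  decide +kernel

/-- A proper 4-coloring of the 5-cycle leaves a color unused iff it falls under one of the three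
conditions defining the summands. -/
lemma exists_hub_color_iff : ∀ a b c d e : Fin 4, a ≠ b → b ≠ c → c ≠ d → d ≠ e → e ≠ a →
    ((∃ p, p ≠ a ∧ p ≠ b ∧ p ≠ c ∧ p ≠ d ∧ p ≠ e) ↔
      ((b = e ∧ (a = d ∨ a = c)) ∨ (b = d ∧ (c = a ∨ c = e))) ∨ (c = e ∧ d = a)) := by
  decide +kernel

lemma card_subtype_or {α : Type*} [Finite α] (p q : α → Prop) (h : ∀ x, p x → ¬ q x) :
    Nat.card {x // p x ∨ q x} = Nat.card {x // p x} + Nat.card {x // q x} := by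
  classical
  have hd : Disjoint p q := by
    rw [Pi.disjoint_iff]
    intro x
    rw [Prop.disjoint_iff]
    exact fun hx => h x hx.1 hx.2
  rw [Nat.card_congr (subtypeOrEquiv p q hd), Nat.card_sum]

/-- For a degree-5 vertex `v` whose neighbourhood `{v1,...,v5}`
induces exactly the 5-cycle `v1v2v3v4v5`, the number of proper 4-colorings of `G`
equals `A + B + C` where `A`, `B`, `C` count proper 4-colorings of `G - v`
subject to the indicated equality constraints. -/
theorem stmt_1 {V : Type*} [Fintype V] (G : SimpleGraph V)
    (v v1 v2 v3 v4 v5 : V)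
    (hv1 : v1 ≠ v) (hv2 : v2 ≠ v) (hv3 : v3 ≠ v) (hv4 : v4 ≠ v) (hv5 : v5 ≠ v)
    (h12d : v1 ≠ v2) (h13d : v1 ≠ v3) (h14d : v1 ≠ v4) (h15d : v1 ≠ v5)
    (h23d : v2 ≠ v3) (h24d : v2 ≠ v4) (h25d : v2 ≠ v5)
    (h34d : v3 ≠ v4) (h35d : v3 ≠ v5) (h45d : v4 ≠ v5)
    (hnbr : G.neighborSet v = {v1, v2, v3, v4, v5})
    (h12 : G.Adj v1 v2) (h23 : G.Adj v2 v3) (h34 : G.Adj v3 v4)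
    (h45 : G.Adj v4 v5) (h51 : G.Adj v5 v1)
    (h13 : ¬ G.Adj v1 v3) (h14 : ¬ G.Adj v1 v4) (h24 : ¬ G.Adj v2 v4)
    (h25 : ¬ G.Adj v2 v5) (h35 : ¬ G.Adj v3 v5) :
    Nat.card {c : V → Fin 4 // ∀ ⦃x y⦄, G.Adj x y → c x ≠ c y} =
      Nat.card {c : ↥{x : V | x ≠ v} → Fin 4 //
          (∀ ⦃x y⦄, (G.induce {x : V | x ≠ v}).Adj x y → c x ≠ c y) ∧
            c ⟨v2, hv2⟩ = c ⟨v5, hv5⟩ ∧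
            (c ⟨v1, hv1⟩ = c ⟨v4, hv4⟩ ∨ c ⟨v1, hv1⟩ = c ⟨v3, hv3⟩)} +
      Nat.card {c : ↥{x : V | x ≠ v} → Fin 4 //
          (∀ ⦃x y⦄, (G.induce {x : V | x ≠ v}).Adj x y → c x ≠ c y) ∧
            c ⟨v2, hv2⟩ = c ⟨v4, hv4⟩ ∧
            (c ⟨v3, hv3⟩ = c ⟨v1, hv1⟩ ∨ c ⟨v3, hv3⟩ = c ⟨v5, hv5⟩)} +
      Nat.card {c : ↥{x : V | x ≠ v} → Fin 4 //
          (∀ ⦃x y⦄, (G.induce {x : V | x ≠ v}).Adj x y → c x ≠ c y) ∧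
            c ⟨v3, hv3⟩ = c ⟨v5, hv5⟩ ∧ c ⟨v4, hv4⟩ = c ⟨v1, hv1⟩} := by
  classical
  have hadj : ∀ x, G.Adj v x ↔ x = v1 ∨ x = v2 ∨ x = v3 ∨ x = v4 ∨ x = v5 := by
    intro x
    rw [← SimpleGraph.mem_neighborSet, hnbr]
    simp
  -- The rim inequalities satisfied by every proper coloring of `G - v`.
  have hrim : ∀ c : ↥{x : V | x ≠ v} → Fin 4,
      (∀ ⦃x y⦄, (G.induce {x : V | x ≠ v}).Adj x y → c x ≠ c y) →
      c ⟨v1, hv1⟩ ≠ c ⟨v2, hv2⟩ ∧ c ⟨v2, hv2⟩ ≠ c ⟨v3, hv3⟩ ∧ c ⟨v3, hv3⟩ ≠ c ⟨v4, hv4⟩ ∧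
      c ⟨v4, hv4⟩ ≠ c ⟨v5, hv5⟩ ∧ c ⟨v5, hv5⟩ ≠ c ⟨v1, hv1⟩ := fun c hc =>
    ⟨hc h12, hc h23, hc h34, hc h45, hc h51⟩
  rw [← card_subtype_or, ← card_subtype_or]
  · refine Nat.card_congr (Equiv.ofBijective
      (fun c => ⟨fun x => c.1 x.1, ?_⟩) ⟨?_, ?_⟩)
    · have hc : ∀ ⦃x y⦄, (G.induce {x : V | x ≠ v}).Adj x y → c.1 x.1 ≠ c.1 y.1 :=
        fun x y hxy => c.2 hxy
      have key := (exists_hub_color_iff (c.1 v1) (c.1 v2) (c.1 v3) (c.1 v4) (c.1 v5)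
        (c.2 h12) (c.2 h23) (c.2 h34) (c.2 h45) (c.2 h51)).1
        ⟨c.1 v, c.2 ((hadj _).2 (by simp)), c.2 ((hadj _).2 (by simp)),
          c.2 ((hadj _).2 (by simp)), c.2 ((hadj _).2 (by simp)), c.2 ((hadj _).2 (by simp))⟩
      rcases key with (h | h) | h
      · exact Or.inl (Or.inl ⟨hc, h⟩)
      · exact Or.inl (Or.inr ⟨hc, h⟩)
      · exact Or.inr ⟨hc, h⟩
    · rintro ⟨c, hc⟩ ⟨c', hc'⟩ h
      have hcc : ∀ x, x ≠ v → c x = c' x := fun x hx =>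
        congrFun (congrArg Subtype.val h) ⟨x, hx⟩
      have hne : ∀ x, G.Adj v x → c v ≠ c x := fun x hx => hc hx
      have hne' : ∀ x, G.Adj v x → c' v ≠ c x := fun x hx => by
        rw [hcc x hx.ne']
        exact hc' hx
      apply Subtype.ext
      funext x
      by_cases hx : x = v
      · subst hx
        exact hub_color_unique _ _ _ _ _ (hc h12) (hc h23) (hc h34) (hc h45) (hc h51)
          _ (hne _ ((hadj _).2 (by simp))) (hne _ ((hadj _).2 (by simp)))
          (hne _ ((hadj _).2 (by simp))) (hne _ ((hadj _).2 (by simp)))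
          (hne _ ((hadj _).2 (by simp)))
          _ (hne' _ ((hadj _).2 (by simp))) (hne' _ ((hadj _).2 (by simp)))
          (hne' _ ((hadj _).2 (by simp))) (hne' _ ((hadj _).2 (by simp)))
          (hne' _ ((hadj _).2 (by simp)))
      · exact hcc x hx
    · rintro ⟨c, h⟩
      have hc : ∀ ⦃x y⦄, (G.induce {x : V | x ≠ v}).Adj x y → c x ≠ c y := by
        rcases h with (h | h) | h <;> exact h.1
      obtain ⟨r1, r2, r3, r4, r5⟩ := hrim c hc
      obtain ⟨p, p1, p2, p3, p4, p5⟩ := (exists_hub_color_iff _ _ _ _ _ r1 r2 r3 r4 r5).2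
        (h.imp (Or.imp And.right And.right) And.right)
      have hp : ∀ x (hx : x ≠ v), G.Adj v x → p ≠ c ⟨x, hx⟩ := by
        intro x hx hvx
        rcases (hadj x).1 hvx with rfl | rfl | rfl | rfl | rfl <;> assumption
      refine ⟨⟨fun x => if hx : x = v then p else c ⟨x, hx⟩, ?_⟩, ?_⟩
      · intro x y hxy
        by_cases hx : x = v
        · have hy : y ≠ v := fun hy => hxy.ne (hx.trans hy.symm)
          simpa [hx, hy] using hp y hy (hx ▸ hxy)
        · by_cases hy : y = v
          · simpa [hx, hy] using (hp x hx (hy ▸ hxy.symm)).symm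
          · simpa [hx, hy] using hc (x := ⟨x, hx⟩) (y := ⟨y, hy⟩) hxy
      · apply Subtype.ext
        funext x
        exact dif_neg x.2
  · rintro c (⟨hc, h⟩ | ⟨hc, h⟩) ⟨-, h'⟩ <;> obtain ⟨r1, r2, r3, r4, r5⟩ := hrim c hc <;> grind
  · rintro c ⟨hc, h⟩ ⟨-, h'⟩
    obtain ⟨r1, r2, r3, r4, r5⟩ := hrim c hc
    grind
end

section
/- Let G be a finite simple graph with k ≥ 2 that is a k-colorable coordinated graph with color axes v_1,…,v_k, and let V_i', V' and V^c be as defined. Then for every vertex u ∈ V^c, the number of indices i ∈ {1,…,k} for which u is adjacent in G to at least one vertex of V_i' is at most k − 2. -/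
/-!
The `k` color axes lie in distinct classes of a partition with exactly `k` classes, so every class
contains an axis and every vertex shares its class with some axis (`exists_sameBlock_axis`).
If `u` shares a class with `v i` in some `k`-coloring partition, then `u` has no neighbour in `Vi i`,
since such a neighbour would lie in that same class (`not_adj_of_sameBlock`). A color variant vertex
`u` shares its class with some `v i₀` in one coloring partition, and, not being in `Vi i₀`, with
another axis `v i₁` in a second one. Hence both `i₀` and `i₁` are excluded from the indices counted.
-/

/-- A `k`-coloring partition of a graph `G`: a partition of the vertex set into
exactly `k` nonempty independent sets. -/
def IsColorPartition {W : Type*} [Fintype W] [DecidableEq W] (G : SimpleGraph W) (k : ℕ)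
    (P : Finpartition (Finset.univ : Finset W)) : Prop :=
  P.parts.card = k ∧ ∀ s ∈ P.parts, ∀ x ∈ s, ∀ y ∈ s, ¬ G.Adj x y

/-- Two vertices lie in the same class of the partition `P`. -/
def SameBlock {W : Type*} [Fintype W] [DecidableEq W]
    (P : Finpartition (Finset.univ : Finset W)) (a b : W) : Prop :=
  ∃ s ∈ P.parts, a ∈ s ∧ b ∈ s

/-- By counting, the injection sending an axis to its class is onto the classes. -/
lemma exists_sameBlock_axis {V : Type*} [Fintype V] [DecidableEq V] {k : ℕ} {v : Fin k → V}
    {P : Finpartition (Finset.univ : Finset V)} (hcard : P.parts.card = k)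
    (hv : ∀ i j : Fin k, i ≠ j → ¬ SameBlock P (v i) (v j)) (u : V) :
    ∃ i, SameBlock P (v i) u := by
  let f : Fin k → P.parts := fun i => ⟨P.part (v i), P.part_mem.2 (Finset.mem_univ _)⟩
  have hf : Function.Injective f := by
    intro i j hij
    by_contra hne
    have h : P.part (v i) = P.part (v j) := congrArg Subtype.val hij
    refine hv i j hne ⟨P.part (v i), (f i).2, P.mem_part (Finset.mem_univ _), ?_⟩
    rw [h]
    exact P.mem_part (Finset.mem_univ _)
  have hbij : Function.Bijective f :=
    (Fintype.bijective_iff_injective_and_card f).2 ⟨hf, by simp [hcard]⟩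
  obtain ⟨i, hi⟩ := hbij.2 ⟨P.part u, P.part_mem.2 (Finset.mem_univ _)⟩
  have h : P.part (v i) = P.part u := congrArg Subtype.val hi
  refine ⟨i, P.part (v i), (f i).2, P.mem_part (Finset.mem_univ _), ?_⟩
  rw [h]
  exact P.mem_part (Finset.mem_univ _)

lemma not_adj_of_sameBlock {V : Type*} [Fintype V] [DecidableEq V] {G : SimpleGraph V} {k : ℕ}
    {P : Finpartition (Finset.univ : Finset V)} (hP : IsColorPartition G k P) {a u w : V}
    (hu : SameBlock P a u) (hw : SameBlock P a w) : ¬ G.Adj u w := by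
  obtain ⟨s, hs, has, hus⟩ := hu
  obtain ⟨t, ht, hat, hwt⟩ := hw
  obtain rfl := P.eq_of_mem_parts hs ht has hat
  exact hP.2 s hs u hus w hwt

/-- in a `k`-colorable coordinated graph (`k ≥ 2`) with color axes
`v 0, …, v (k-1)`, color invariant groups `Vi i`, and color variant set
`V^c = V ∖ ⋃ i, Vi i`, every vertex `u ∈ V^c` is adjacent to vertices of at most
`k - 2` of the color invariant groups. -/
theorem stmt_3 {V : Type*} [Fintype V] [DecidableEq V] (G : SimpleGraph V) (k : ℕ)
    (hk : 2 ≤ k) (v : Fin k → V)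
    (hex : ∃ P : Finpartition (Finset.univ : Finset V), IsColorPartition G k P)
    (haxes : ∀ P : Finpartition (Finset.univ : Finset V), IsColorPartition G k P →
      ∀ i j : Fin k, i ≠ j → ¬ SameBlock P (v i) (v j))
    (Vi : Fin k → Set V)
    (hVi : ∀ i, Vi i = {u : V | ∀ P : Finpartition (Finset.univ : Finset V),
      IsColorPartition G k P → SameBlock P (v i) u})
    (u : V) (hu : u ∉ ⋃ i, Vi i) :
    {i : Fin k | ∃ w ∈ Vi i, G.Adj u w}.ncard ≤ k - 2 := by
  obtain ⟨P₀, hP₀⟩ := hex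
  obtain ⟨i₀, h₀⟩ := exists_sameBlock_axis hP₀.1 (haxes P₀ hP₀) u
  have hu₀ : ¬ ∀ P : Finpartition (Finset.univ : Finset V),
      IsColorPartition G k P → SameBlock P (v i₀) u := fun h =>
    hu (Set.mem_iUnion.2 ⟨i₀, by rw [hVi]; exact h⟩)
  push Not at hu₀
  obtain ⟨P₁, hP₁, hn⟩ := hu₀
  obtain ⟨i₁, h₁⟩ := exists_sameBlock_axis hP₁.1 (haxes P₁ hP₁) u
  have hne : i₀ ≠ i₁ := by
    rintro rfl
    exact hn h₁
  have hsub : {i : Fin k | ∃ w ∈ Vi i, G.Adj u w} ⊆ ({i₀, i₁} : Set (Fin k))ᶜ := by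
    rintro i ⟨w, hw, hadj⟩ hi
    rw [hVi] at hw
    rcases hi with rfl | rfl
    · exact not_adj_of_sameBlock hP₀ h₀ (hw P₀ hP₀) hadj
    · exact not_adj_of_sameBlock hP₁ h₁ (hw P₁ hP₁) hadj
  refine (Set.ncard_le_ncard hsub (Set.toFinite _)).trans ?_
  rw [Set.ncard_compl, Set.ncard_pair hne, Nat.card_fin]
end

section
/- (Necessity direction of the characterization of uniquely near 4-colorable graphs.) Let G be a finite simple graph admitting at least one 4-coloring partition, and suppose there is a vertex subset V' ⊆ V(G) such that the induced subgraph G[V'] has chromatic number 4 and is uniquely 4-colorable (G is uniquely near 4-colorable). Then there exist four vertices v_1, v_2, v_3, v_4 of G such that every 4-coloring partition of G places v_1, v_2, v_3, v_4 in four pairwise distinct classes. -/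
/-- The partition of `W` into the nonempty fibres of `f`. -/
noncomputable def kernelPartition {W C : Type*} [Fintype W] [DecidableEq W] [DecidableEq C]
    (f : W → C) : Finpartition (Finset.univ : Finset W) :=
  haveI : DecidableRel (Setoid.ker f).r := fun a b => inferInstanceAs (Decidable (f a = f b))
  Finpartition.ofSetoid (Setoid.ker f)

lemma mem_kernelPartition_parts {W C : Type*} [Fintype W] [DecidableEq W] [DecidableEq C]
    (f : W → C) (s : Finset W) :
    s ∈ (kernelPartition f).parts ↔ ∃ x, Finset.univ.filter (fun y => f x = f y) = s := by
  simp [kernelPartition, Finpartition.ofSetoid, Finpartition.ofSetSetoid, Setoid.ker_def]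

lemma card_kernelPartition_parts {W C : Type*} [Fintype W] [DecidableEq W] [DecidableEq C]
    (f : W → C) : (kernelPartition f).parts.card = (Finset.univ.image f).card := by
  have h : (kernelPartition f).parts =
      (Finset.univ.image f).image (fun c => Finset.univ.filter (fun y => c = f y)) := by
    ext s
    rw [mem_kernelPartition_parts]
    simp
  rw [h, Finset.card_image_of_injOn]
  intro c hc d _ hcd
  obtain ⟨x, -, rfl⟩ := Finset.mem_image.1 (Finset.mem_coe.1 hc)
  have hx : x ∈ Finset.univ.filter (fun y => d = f y) := by
    rw [← show _ = Finset.univ.filter (fun y => d = f y) from hcd]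
    simp
  exact (Finset.mem_filter.1 hx).2.symm

/-- A proper coloring of a `k`-chromatic graph that uses at most `k` colors uses exactly `k`, so
its color classes form a `k`-coloring partition. -/
lemma kernelPartition_isColorPartition {W C : Type*} [Fintype W] [DecidableEq W] [DecidableEq C]
    (H : SimpleGraph W) (k : ℕ) (hchrom : H.chromaticNumber = k) (f : W → C)
    (hf : ∀ x y, H.Adj x y → f x ≠ f y) (hle : (Finset.univ.image f).card ≤ k) :
    IsColorPartition H k (kernelPartition f) := by
  refine ⟨?_, ?_⟩
  · rw [card_kernelPartition_parts]
    refine le_antisymm hle ?_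
    let c : H.Coloring (Finset.univ.image f) :=
      SimpleGraph.Coloring.mk
        (fun x => ⟨f x, Finset.mem_image_of_mem f (Finset.mem_univ x)⟩)
        (fun {x y} hxy h => hf x y hxy (congrArg Subtype.val h))
    have h := c.colorable.chromaticNumber_le
    rw [hchrom, Fintype.card_coe] at h
    exact_mod_cast h
  · intro s hs x hx y hy hxy
    obtain ⟨z, rfl⟩ := (mem_kernelPartition_parts f s).1 hs
    exact hf x y hxy ((Finset.mem_filter.1 hx).2.symm.trans (Finset.mem_filter.1 hy).2)

/-- necessity direction of the characterization of uniquely near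
4-colorable graphs: if `G` admits a 4-coloring partition and there is a vertex
subset `V'` such that the induced subgraph `G[V']` has chromatic number 4 and is
uniquely 4-colorable, then there are four vertices `v1, v2, v3, v4` lying in four
pairwise distinct classes of every 4-coloring partition of `G`. -/
theorem stmt_6 {V : Type*} [Fintype V] [DecidableEq V] (G : SimpleGraph V)
    (hex : ∃ P : Finpartition (Finset.univ : Finset V), IsColorPartition G 4 P)
    (V' : Finset V)
    (hchrom : (G.induce (V' : Set V)).chromaticNumber = 4)
    (huniq : ∃! P : Finpartition (Finset.univ : Finset ↥(V' : Set V)),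
      IsColorPartition (G.induce (V' : Set V)) 4 P) :
    ∃ v1 v2 v3 v4 : V,
      ∀ P : Finpartition (Finset.univ : Finset V), IsColorPartition G 4 P →
        ∀ s ∈ P.parts,
          ¬(v1 ∈ s ∧ v2 ∈ s) ∧ ¬(v1 ∈ s ∧ v3 ∈ s) ∧ ¬(v1 ∈ s ∧ v4 ∈ s) ∧
          ¬(v2 ∈ s ∧ v3 ∈ s) ∧ ¬(v2 ∈ s ∧ v4 ∈ s) ∧ ¬(v3 ∈ s ∧ v4 ∈ s) := by
  obtain ⟨Q, hQ, huQ⟩ := huniq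
  let e := Q.parts.equivFinOfCardEq hQ.1
  have hne : ∀ i : Fin 4, ∃ x, x ∈ (e.symm i).1 := fun i =>
    Q.nonempty_of_mem_parts (e.symm i).2
  choose g hg using hne
  have key : ∀ P : Finpartition (Finset.univ : Finset V), IsColorPartition G 4 P →
      ∀ s ∈ P.parts, ∀ i j : Fin 4, i ≠ j → ¬((g i : V) ∈ s ∧ (g j : V) ∈ s) := by
    rintro P hP s hs i j hij ⟨hi, hj⟩
    let f : ↥(V' : Set V) → Finset V := fun x => P.part x
    have hR : kernelPartition f = Q := by
      refine huQ _ (kernelPartition_isColorPartition _ 4 hchrom f ?_ ?_)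
      · intro x y hxy h
        refine hP.2 (P.part x) (P.part_mem.2 (Finset.mem_univ _)) x
          (P.mem_part (Finset.mem_univ _)) y ?_ hxy
        rw [show P.part x = P.part y from h]
        exact P.mem_part (Finset.mem_univ _)
      · rw [← hP.1]
        refine Finset.card_le_card fun c hc => ?_
        obtain ⟨x, -, rfl⟩ := Finset.mem_image.1 hc
        exact P.part_mem.2 (Finset.mem_univ _)
    have hfij : f (g i) = f (g j) :=
      (P.part_eq_of_mem hs hi).trans (P.part_eq_of_mem hs hj).symm
    have hmem : (e.symm i).1 ∈ (kernelPartition f).parts := hR ▸ (e.symm i).2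
    obtain ⟨z, hz⟩ := (mem_kernelPartition_parts f _).1 hmem
    have hji : g j ∈ (e.symm i).1 := by
      have h := hg i
      rw [← hz] at h ⊢
      exact Finset.mem_filter.2 ⟨Finset.mem_univ _, (Finset.mem_filter.1 h).2.trans hfij⟩
    exact hij (e.symm.injective (Subtype.ext
      (Q.eq_of_mem_parts (e.symm i).2 (e.symm j).2 hji (hg j))))
  refine ⟨g 0, g 1, g 2, g 3, fun P hP s hs => ?_⟩
  exact ⟨key P hP s hs 0 1 (by decide), key P hP s hs 0 2 (by decide),
    key P hP s hs 0 3 (by decide), key P hP s hs 1 2 (by decide),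
    key P hP s hs 1 3 (by decide), key P hP s hs 2 3 (by decide)⟩
end

section
/- Let G be a finite simple graph and let v be a vertex of G of degree 4 whose neighbourhood is {v1, v2, v3, v4}, where v1v2, v2v3, v3v4, v4v1 are edges of G while v1v3 and v2v4 are not edges of G. If there exists a proper 4-coloring g of G − v that uses all four colors and satisfies both g(v1) = g(v3) and g(v2) = g(v4), then G admits at least two distinct 4-coloring partitions; in particular G is not uniquely 4-colorable. -/
/-- The colour classes of a surjective proper `k`-colouring form a `k`-colouring partition, whose
parts relate exactly the vertices of equal colour. -/
lemma exists_colorPartition {V : Type*} [Fintype V] [DecidableEq V] (G : SimpleGraph V) {k : ℕ}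
    (f : V → Fin k) (hf : ∀ x y, G.Adj x y → f x ≠ f y) (hs : Function.Surjective f) :
    ∃ P : Finpartition (Finset.univ : Finset V), IsColorPartition G k P ∧
      ∀ x y, (∃ s ∈ P.parts, x ∈ s ∧ y ∈ s) ↔ f x = f y := by
  let cls : Fin k → Finset V := fun c => Finset.univ.filter (fun x => f x = c)
  have hmem : ∀ c x, x ∈ cls c ↔ f x = c := by simp [cls]
  have hinj : Function.Injective cls := by
    intro c d h
    obtain ⟨x, hx⟩ := hs c
    have h1 : x ∈ cls d := h ▸ (hmem c x).2 hx
    exact hx.symm.trans ((hmem d x).1 h1)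
  let P : Finpartition (Finset.univ : Finset V) :=
    Finpartition.ofExistsUnique (Finset.univ.image cls) (fun _ _ => Finset.subset_univ _)
      (by
        intro x _
        refine ⟨cls (f x), ⟨by simp, (hmem _ _).2 rfl⟩, ?_⟩
        rintro t ⟨ht, hxt⟩
        obtain ⟨c, -, rfl⟩ := Finset.mem_image.1 ht
        rw [(hmem _ _).1 hxt])
      (by
        intro h
        obtain ⟨c, -, hc⟩ := Finset.mem_image.1 h
        obtain ⟨x, hx⟩ := hs c
        have h1 := (hmem c x).2 hx
        rw [hc] at h1
        simp at h1)
  have hP : P.parts = Finset.univ.image cls := rfl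
  refine ⟨P, ⟨?_, ?_⟩, ?_⟩
  · rw [hP, Finset.card_image_of_injective _ hinj, Finset.card_univ, Fintype.card_fin]
  · intro s hsP x hx y hy hxy
    obtain ⟨c, -, rfl⟩ := Finset.mem_image.1 (hP ▸ hsP)
    exact hf x y hxy (((hmem _ _).1 hx).trans ((hmem _ _).1 hy).symm)
  · intro x y
    constructor
    · rintro ⟨s, hsP, hx, hy⟩
      obtain ⟨c, -, rfl⟩ := Finset.mem_image.1 (hP ▸ hsP)
      exact ((hmem _ _).1 hx).trans ((hmem _ _).1 hy).symm
    · intro h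
      exact ⟨cls (f x), by simp [hP], (hmem _ _).2 rfl, (hmem _ _).2 h.symm⟩

/-- for a degree-4 vertex `v` with neighbourhood `{v1, v2, v3, v4}`
inducing the 4-cycle `v1v2v3v4` (diagonals absent), if `G - v` has a surjective
proper 4-coloring `g` with `g v1 = g v3` and `g v2 = g v4`, then `G` has at least
two distinct 4-coloring partitions; in particular `G` is not uniquely 4-colorable. -/
theorem stmt_9 {V : Type*} [Fintype V] [DecidableEq V] (G : SimpleGraph V)
    (v v1 v2 v3 v4 : V)
    (hv1 : v1 ≠ v) (hv2 : v2 ≠ v) (hv3 : v3 ≠ v) (hv4 : v4 ≠ v)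
    (h12d : v1 ≠ v2) (h13d : v1 ≠ v3) (h14d : v1 ≠ v4)
    (h23d : v2 ≠ v3) (h24d : v2 ≠ v4) (h34d : v3 ≠ v4)
    (hnbr : G.neighborSet v = {v1, v2, v3, v4})
    (h12 : G.Adj v1 v2) (h23 : G.Adj v2 v3) (h34 : G.Adj v3 v4) (h41 : G.Adj v4 v1)
    (h13 : ¬ G.Adj v1 v3) (h24 : ¬ G.Adj v2 v4)
    (hg : ∃ g : ↥{x : V | x ≠ v} → Fin 4,
      (∀ ⦃x y⦄, (G.induce {x : V | x ≠ v}).Adj x y → g x ≠ g y) ∧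
      Function.Surjective g ∧
      g ⟨v1, hv1⟩ = g ⟨v3, hv3⟩ ∧ g ⟨v2, hv2⟩ = g ⟨v4, hv4⟩) :
    (∃ P Q : Finpartition (Finset.univ : Finset V),
      IsColorPartition G 4 P ∧ IsColorPartition G 4 Q ∧ P ≠ Q) ∧
    ¬ ∃! P : Finpartition (Finset.univ : Finset V), IsColorPartition G 4 P := by
  obtain ⟨g, hproper, hsurj, e13, e24⟩ := hg
  have hcol : ∀ c d : Fin 4, ∃ a b : Fin 4, a ≠ b ∧ a ≠ c ∧ a ≠ d ∧ b ≠ c ∧ b ≠ d := by decide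
  obtain ⟨a, b, hab, ha1, ha2, hb1, hb2⟩ := hcol (g ⟨v1, hv1⟩) (g ⟨v2, hv2⟩)
  let ext : Fin 4 → V → Fin 4 := fun c x => if h : x ≠ v then g ⟨x, h⟩ else c
  have ext_v : ∀ c, ext c v = c := by intro c; simp [ext]
  have ext_ne : ∀ c x (h : x ≠ v), ext c x = g ⟨x, h⟩ := by
    intro c x h; simp only [ext, dif_pos h]
  have ext_surj : ∀ c, Function.Surjective (ext c) := by
    intro c d
    obtain ⟨⟨x, hx⟩, hd⟩ := hsurj d
    exact ⟨x, (ext_ne c x hx).trans hd⟩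
  have ext_nbr : ∀ c, c ≠ g ⟨v1, hv1⟩ → c ≠ g ⟨v2, hv2⟩ → ∀ y, G.Adj v y → ext c y ≠ c := by
    intro c h1 h2 y hy
    have hmemN : y ∈ G.neighborSet v := hy
    rw [hnbr] at hmemN
    rcases hmemN with rfl | rfl | rfl | rfl
    · rw [ext_ne c _ hv1]; exact h1.symm
    · rw [ext_ne c _ hv2]; exact h2.symm
    · rw [ext_ne c _ hv3, ← e13]; exact h1.symm
    · rw [ext_ne c _ hv4, ← e24]; exact h2.symm
  have ext_proper : ∀ c, c ≠ g ⟨v1, hv1⟩ → c ≠ g ⟨v2, hv2⟩ →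
      ∀ x y, G.Adj x y → ext c x ≠ ext c y := by
    intro c h1 h2 x y hxy
    by_cases hx : x = v
    · subst hx
      rw [ext_v]
      exact (ext_nbr c h1 h2 y hxy).symm
    by_cases hy : y = v
    · subst hy
      rw [ext_v]
      exact ext_nbr c h1 h2 x hxy.symm
    rw [ext_ne c x hx, ext_ne c y hy]
    exact hproper (x := ⟨x, hx⟩) (y := ⟨y, hy⟩) hxy
  obtain ⟨P, hP, hPrel⟩ := exists_colorPartition G (ext a) (ext_proper a ha1 ha2) (ext_surj a)
  obtain ⟨Q, hQ, hQrel⟩ := exists_colorPartition G (ext b) (ext_proper b hb1 hb2) (ext_surj b)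
  have hPQ : P ≠ Q := by
    rintro rfl
    obtain ⟨⟨w, hw⟩, hwa⟩ := hsurj a
    have h1 : ext a v = ext a w := by rw [ext_v, ext_ne a w hw, hwa]
    have h2 := (hQrel v w).1 ((hPrel v w).2 h1)
    rw [ext_v, ext_ne b w hw, hwa] at h2
    exact hab h2.symm
  exact ⟨⟨P, Q, hP, hQ, hPQ⟩, fun h => hPQ (h.unique hP hQ)⟩
end

section
/- (Quasi-separable gluing along a triangle, the key step in Case 2 of the paper's Theorem 4.2.) Let G be a finite simple graph and let A, B ⊆ V(G) satisfy A ∪ B = V(G) and A ∩ B = {u_1, u_2, u_3}, where u_1, u_2, u_3 are pairwise adjacent in G, and suppose every edge of G has both endpoints in A or both endpoints in B. If the induced subgraph G[B] admits a proper 4-coloring, and the induced subgraph G[A] admits at least two distinct 4-coloring partitions, then G admits at least two distinct 4-coloring partitions; in particular G is not uniquely 4-colorable. -/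
lemma finpartition_ext_part {W : Type*} [Fintype W] [DecidableEq W]
    {P Q : Finpartition (Finset.univ : Finset W)}
    (h : ∀ x y, P.part x = P.part y ↔ Q.part x = Q.part y) : P = Q := by
  have key : ∀ x, P.part x = Q.part x := by
    intro x
    ext y
    rw [P.mem_part_iff_part_eq_part (Finset.mem_univ _) (Finset.mem_univ _),
      Q.mem_part_iff_part_eq_part (Finset.mem_univ _) (Finset.mem_univ _)]
    exact h y x
  have sub : ∀ {R S : Finpartition (Finset.univ : Finset W)},
      (∀ x, R.part x = S.part x) → ∀ s ∈ R.parts, s ∈ S.parts := by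
    intro R S hRS s hs
    obtain ⟨x, hx⟩ := R.nonempty_of_mem_parts hs
    rw [← R.part_eq_of_mem hs hx, hRS x]
    exact S.part_mem.2 (Finset.mem_univ x)
  ext s
  exact ⟨sub key s, sub (fun x => (key x).symm) s⟩

lemma exists_coloring_of_partition {W : Type*} [Fintype W] [DecidableEq W] {H : SimpleGraph W}
    {k : ℕ} {P : Finpartition (Finset.univ : Finset W)} (hP : IsColorPartition H k P) :
    ∃ f : W → Fin k, Function.Surjective f ∧ (∀ x y, H.Adj x y → f x ≠ f y) ∧
      ∀ x y, f x = f y ↔ P.part x = P.part y := by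
  obtain ⟨hcard, hind⟩ := hP
  let e : P.parts ≃ Fin k := P.parts.equivFinOfCardEq hcard
  have hmem : ∀ x, P.part x ∈ P.parts := fun x => P.part_mem.2 (Finset.mem_univ x)
  have hiff : ∀ x y, e ⟨P.part x, hmem x⟩ = e ⟨P.part y, hmem y⟩ ↔ P.part x = P.part y := by
    intro x y
    rw [e.apply_eq_iff_eq, Subtype.mk.injEq]
  refine ⟨fun x => e ⟨P.part x, hmem x⟩, ?_, ?_, hiff⟩
  · intro i
    obtain ⟨⟨s, hs⟩, rfl⟩ := e.surjective i
    obtain ⟨x, hx⟩ := P.nonempty_of_mem_parts hs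
    exact ⟨x, congrArg e (Subtype.ext (P.part_eq_of_mem hs hx))⟩
  · intro x y hxy heq
    have h := (hiff x y).1 heq
    refine hind _ (hmem y) x ?_ y (P.mem_part (Finset.mem_univ y)) hxy
    rw [← h]
    exact P.mem_part (Finset.mem_univ x)

lemma exists_partition_of_coloring {W : Type*} [Fintype W] [DecidableEq W] {H : SimpleGraph W}
    {k : ℕ} (f : W → Fin k) (hsurj : Function.Surjective f)
    (hf : ∀ x y, H.Adj x y → f x ≠ f y) :
    ∃ P : Finpartition (Finset.univ : Finset W), IsColorPartition H k P ∧
      ∀ x y, f x = f y ↔ P.part x = P.part y := by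
  let fiber : Fin k → Finset W := fun i => Finset.univ.filter (fun x => f x = i)
  have hmem : ∀ i x, x ∈ fiber i ↔ f x = i := by simp [fiber]
  have hinj : Function.Injective fiber := by
    intro i j hij
    obtain ⟨x, rfl⟩ := hsurj i
    exact (hmem j x).1 (hij ▸ (hmem _ x).2 rfl)
  let P : Finpartition (Finset.univ : Finset W) :=
    Finpartition.ofExistsUnique (Finset.univ.image fiber) (fun _ _ => Finset.subset_univ _)
      (fun x _ => ⟨fiber (f x), by simp [hmem], by
        rintro s ⟨hs, hx⟩
        obtain ⟨i, -, rfl⟩ := Finset.mem_image.1 hs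
        rw [(hmem i x).1 hx]⟩)
      (by
        intro h
        obtain ⟨i, -, hi⟩ := Finset.mem_image.1 h
        obtain ⟨x, hx⟩ := hsurj i
        have := (hmem i x).2 hx
        simp [hi] at this)
  have hparts : P.parts = Finset.univ.image fiber := rfl
  have hpart : ∀ x, P.part x = fiber (f x) := fun x =>
    P.part_eq_of_mem (by simp [hparts]) ((hmem _ x).2 rfl)
  refine ⟨P, ⟨?_, ?_⟩, ?_⟩
  · rw [hparts, Finset.card_image_of_injective _ hinj, Finset.card_univ, Fintype.card_fin]
  · intro s hs x hx y hy hxy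
    obtain ⟨i, -, rfl⟩ := Finset.mem_image.1 (hparts ▸ hs)
    exact hf x y hxy (((hmem i x).1 hx).trans ((hmem i y).1 hy).symm)
  · intro x y
    rw [hpart, hpart, hinj.eq_iff]

lemma exists_perm_of_triple {α : Type*} {a₁ a₂ a₃ b₁ b₂ b₃ : α}
    (ha12 : a₁ ≠ a₂) (ha13 : a₁ ≠ a₃) (ha23 : a₂ ≠ a₃)
    (hb12 : b₁ ≠ b₂) (hb13 : b₁ ≠ b₃) (hb23 : b₂ ≠ b₃) :
    ∃ σ : Equiv.Perm α, σ a₁ = b₁ ∧ σ a₂ = b₂ ∧ σ a₃ = b₃ := by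
  have inj : ∀ {x y z : α}, x ≠ y → x ≠ z → y ≠ z → Function.Injective ![x, y, z] := by
    intro x y z hxy hxz hyz i j hij
    fin_cases i <;> fin_cases j <;> simp_all
  have := Equiv.Perm.isMultiplyPretransitive α 3
  obtain ⟨σ, hσ⟩ := MulAction.exists_smul_eq (Equiv.Perm α)
    (⟨![a₁, a₂, a₃], inj ha12 ha13 ha23⟩ : Fin 3 ↪ α) ⟨![b₁, b₂, b₃], inj hb12 hb13 hb23⟩
  exact ⟨σ, by simpa using DFunLike.congr_fun hσ 0, by simpa using DFunLike.congr_fun hσ 1,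
    by simpa using DFunLike.congr_fun hσ 2⟩

/-- Every 4-coloring partition of `G[A]` is the trace on `A` of a 4-coloring partition of `G`. -/
lemma exists_glued_partition {V : Type*} [Fintype V] [DecidableEq V] (G : SimpleGraph V)
    (A B : Finset V) (u1 u2 u3 : V)
    (hunion : A ∪ B = Finset.univ)
    (hinter : A ∩ B = {u1, u2, u3})
    (h12 : G.Adj u1 u2) (h13 : G.Adj u1 u3) (h23 : G.Adj u2 u3)
    (hedge : ∀ ⦃x y⦄, G.Adj x y → (x ∈ A ∧ y ∈ A) ∨ (x ∈ B ∧ y ∈ B))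
    (c : ↥(B : Set V) → Fin 4)
    (hc : ∀ ⦃x y⦄, (G.induce (B : Set V)).Adj x y → c x ≠ c y)
    (P : Finpartition (Finset.univ : Finset ↥(A : Set V)))
    (hP : IsColorPartition (G.induce (A : Set V)) 4 P) :
    ∃ P' : Finpartition (Finset.univ : Finset V), IsColorPartition G 4 P' ∧
      ∀ x y : ↥(A : Set V), P'.part x = P'.part y ↔ P.part x = P.part y := by
  obtain ⟨f, hsurj, hf, hfP⟩ := exists_coloring_of_partition hP
  have hu : ∀ u, u = u1 ∨ u = u2 ∨ u = u3 ↔ u ∈ A ∧ u ∈ B := by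
    intro u
    rw [← Finset.mem_inter, hinter]
    simp
  obtain ⟨hA1, hB1⟩ := (hu u1).1 (by simp)
  obtain ⟨hA2, hB2⟩ := (hu u2).1 (by simp)
  obtain ⟨hA3, hB3⟩ := (hu u3).1 (by simp)
  obtain ⟨σ, hσ1, hσ2, hσ3⟩ := exists_perm_of_triple
    (hc (x := ⟨u1, hB1⟩) (y := ⟨u2, hB2⟩) h12) (hc (x := ⟨u1, hB1⟩) (y := ⟨u3, hB3⟩) h13)
    (hc (x := ⟨u2, hB2⟩) (y := ⟨u3, hB3⟩) h23)
    (hf ⟨u1, hA1⟩ ⟨u2, hA2⟩ h12) (hf ⟨u1, hA1⟩ ⟨u3, hA3⟩ h13) (hf ⟨u2, hA2⟩ ⟨u3, hA3⟩ h23)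
  have hagree : ∀ x (hxA : x ∈ A) (hxB : x ∈ B), f ⟨x, hxA⟩ = σ (c ⟨x, hxB⟩) := by
    intro x hxA hxB
    rcases (hu x).2 ⟨hxA, hxB⟩ with rfl | rfl | rfl
    · exact hσ1.symm
    · exact hσ2.symm
    · exact hσ3.symm
  have hB_of : ∀ x, x ∉ A → x ∈ B := fun x hx =>
    (Finset.mem_union.1 (hunion ▸ Finset.mem_univ x)).resolve_left hx
  let d : V → Fin 4 := fun x => if hx : x ∈ A then f ⟨x, hx⟩ else σ (c ⟨x, hB_of x hx⟩)
  have hdA : ∀ x (hx : x ∈ A), d x = f ⟨x, hx⟩ := fun x hx => dif_pos hx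
  have hdB : ∀ x (hx : x ∈ B), d x = σ (c ⟨x, hx⟩) := by
    intro x hx
    by_cases hxA : x ∈ A
    · rw [hdA x hxA, hagree x hxA hx]
    · exact dif_neg hxA
  obtain ⟨P', hP', hdP'⟩ := exists_partition_of_coloring (H := G) d
    (fun i => by
      obtain ⟨⟨x, hx⟩, rfl⟩ := hsurj i
      exact ⟨x, hdA x hx⟩)
    (fun x y hxy => by
      rcases hedge hxy with ⟨hx, hy⟩ | ⟨hx, hy⟩
      · rw [hdA x hx, hdA y hy]
        exact hf ⟨x, hx⟩ ⟨y, hy⟩ hxy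
      · rw [hdB x hx, hdB y hy]
        exact fun h => hc (x := ⟨x, hx⟩) (y := ⟨y, hy⟩) hxy (σ.injective h))
  refine ⟨P', hP', ?_⟩
  rintro ⟨x, hx⟩ ⟨y, hy⟩
  rw [← hdP', ← hfP, hdA x hx, hdA y hy]

/-- quasi-separable gluing along a triangle: suppose
`A ∪ B = V(G)`, `A ∩ B = {u1, u2, u3}` with `u1, u2, u3` pairwise adjacent, and
every edge of `G` lies within `A` or within `B`. If `G[B]` admits a proper
4-coloring and `G[A]` has at least two distinct 4-coloring partitions, then `G`
has at least two distinct 4-coloring partitions; in particular `G` is not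
uniquely 4-colorable. -/
theorem stmt_10 {V : Type*} [Fintype V] [DecidableEq V] (G : SimpleGraph V)
    (A B : Finset V) (u1 u2 u3 : V)
    (hunion : A ∪ B = Finset.univ)
    (hinter : A ∩ B = {u1, u2, u3})
    (h12 : G.Adj u1 u2) (h13 : G.Adj u1 u3) (h23 : G.Adj u2 u3)
    (hedge : ∀ ⦃x y⦄, G.Adj x y → (x ∈ A ∧ y ∈ A) ∨ (x ∈ B ∧ y ∈ B))
    (hB : ∃ c : ↥(B : Set V) → Fin 4,
      ∀ ⦃x y⦄, (G.induce (B : Set V)).Adj x y → c x ≠ c y)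
    (hA : ∃ P Q : Finpartition (Finset.univ : Finset ↥(A : Set V)),
      IsColorPartition (G.induce (A : Set V)) 4 P ∧
      IsColorPartition (G.induce (A : Set V)) 4 Q ∧ P ≠ Q) :
    (∃ P Q : Finpartition (Finset.univ : Finset V),
      IsColorPartition G 4 P ∧ IsColorPartition G 4 Q ∧ P ≠ Q) ∧
    ¬ ∃! P : Finpartition (Finset.univ : Finset V), IsColorPartition G 4 P := by
  obtain ⟨c, hc⟩ := hB
  obtain ⟨P, Q, hP, hQ, hPQ⟩ := hA
  obtain ⟨P', hP', hPP'⟩ := exists_glued_partition G A B u1 u2 u3 hunion hinter h12 h13 h23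
    hedge c hc P hP
  obtain ⟨Q', hQ', hQQ'⟩ := exists_glued_partition G A B u1 u2 u3 hunion hinter h12 h13 h23
    hedge c hc Q hQ
  have hne : P' ≠ Q' := by
    rintro rfl
    exact hPQ (finpartition_ext_part fun x y => (hPP' x y).symm.trans (hQQ' x y))
  exact ⟨⟨P', Q', hP', hQ', hne⟩, fun h => hne (h.unique hP' hQ')⟩
end
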